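/- Let 𝐯 = (11,v₂) with v₂ ≥ 1 and 𝐤 = (3,1). Then D(𝐯,𝐤,2) = 3·v₂ if 1 ≤ v₂ ≤ 5; 16 if v₂ = 6; and 17 if v₂ ≥ 7. -/

import Mathlib

/-!
A generalized packing with `𝐯 = (11, v₂)`, `𝐤 = (3, 1)`, `t = 2`, `λ = 1` is the same as a set of
triples on 11 points, any two sharing at most one point, coloured by `v₂` colours so that
equal-coloured triples are disjoint (`isGenPacking_of_coloring`,
`exists_coloring_of_isGenPacking`).

Upper bounds. Eleven points hold at most three disjoint triples, whence `3 * v₂`. The graph of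
pairs in no triple has all degrees even, since the triples through a point partition its covered
neighbours into pairs, and it has `55 - 3 * n` edges when there are `n` triples. With 18 triples it
would be a single edge, so `n ≤ 17` (`TriPack.card_le`). With 17 triples it has four edges and is
therefore a 4-cycle (`TriPack.leave_cycle`). The points can then be labelled so that the cycle and
five of the triples are prescribed (`TriPack.exists_labelling`). A backtracking search
(`noCompletion`), evaluated in the kernel, runs through all completions to 17 triples and checks
that none of them can be partitioned into six classes of disjoint triples
(`TriPack.not_six_colorable`); hence at most 16 blocks when `v₂ = 6`.

Lower bounds. One packing of 17 triples (`exTri`) has a colouring by seven colours in which the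
first five are used three times and the last two once; the triples whose colour is less than `v₂`
number `3 * v₂`, `16` and `17` in the three cases.
-/

open Finset

/-- A `t`-`(𝐯,𝐤,λ)` generalized packing: a multiset of blocks `B` with `|B i| = k i`,
such that for every `(𝐤,t)`-admissible tuple `t'` and every tuple of sets `T` with
`|T i| = t' i`, at most `lam` blocks contain `T` componentwise. -/
def IsGenPacking {ι : Type} [Fintype ι] [DecidableEq ι] (t lam : ℕ) (v k : ι → ℕ)
    (P : Multiset (∀ i : ι, Finset (Fin (v i)))) : Prop :=
  (∀ B ∈ P, ∀ i, (B i).card = k i) ∧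
  ∀ t' : ι → ℕ, (∀ i, t' i ≤ k i) → (∑ i, t' i) = t →
    ∀ T : ∀ i : ι, Finset (Fin (v i)), (∀ i, (T i).card = t' i) →
      (P.filter (fun B => ∀ i, T i ⊆ B i)).card ≤ lam

/-- The generalized packing number `D_λ(𝐯,𝐤,t)`. -/
noncomputable def genPackingNumber (ι : Type) [Fintype ι] [DecidableEq ι] (t lam : ℕ) (v k : ι → ℕ) : ℕ :=
  sSup {N | ∃ P, IsGenPacking t lam v k P ∧ Multiset.card P = N}

/-- The ordinary packing number `D_λ(v,k,t)`, as the case `m = 1`. -/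
noncomputable def ordPackingNumber (v k t lam : ℕ) : ℕ :=
  genPackingNumber (Fin 1) t lam (fun _ => v) (fun _ => k)

/-! ### The exhaustive search and its soundness -/

/-- A triple of labels; the eleven points are labelled by the numbers below `11`. -/
abbrev Tri := ℕ × ℕ × ℕ

def Tri.has (t : Tri) (x : ℕ) : Bool := t.1 == x || t.2.1 == x || t.2.2 == x

/-- The set of points named by a triple of labels under the labelling `e`. -/
def Tri.toSet (e : ℕ → Fin 11) (t : Tri) : Finset (Fin 11) := {e t.1, e t.2.1, e t.2.2}

/-- Some triple of the list contains both labels. -/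
def covered (cs : List Tri) (x y : ℕ) : Bool := cs.any fun t => t.has x && t.has y

/-- The edges, in both orientations, of the 4-cycle `0 - 1 - 2 - 3 - 0` of uncovered pairs. -/
def isLeave (x y : ℕ) : Bool :=
  [(0, 1), (1, 0), (1, 2), (2, 1), (2, 3), (3, 2), (3, 0), (0, 3)].any fun p =>
    p.1 == x && p.2 == y

/-- `Nat.testBit`, spelled with operations that the kernel evaluates on binary numerals. -/
def bitAt (M i : ℕ) : Bool := Nat.beq (Nat.land 1 (Nat.shiftRight M i)) 1

/-- Backtracking test that the listed triples cannot be distributed over six classes of pairwise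
disjoint triples. The first `n` classes are in use, and bit `11 * j + x` of `M` records that
the point `x` is occupied in class `j`. New classes are opened in order, which breaks the
symmetry between the colours. -/
def uncolorable : List Tri → ℕ → ℕ → Bool
  | [], _, _ => false
  | t :: ts, M, n => (List.range (min (n + 1) 6)).all fun j =>
      bitAt M (11 * j + t.1) || bitAt M (11 * j + t.2.1) || bitAt M (11 * j + t.2.2) ||
        uncolorable ts (M ||| 2 ^ (11 * j + t.1) ||| 2 ^ (11 * j + t.2.1) ||| 2 ^ (11 * j + t.2.2))
          (if j == n then n + 1 else n)

/-- Exhaustive search: however the triples `cs` are extended so as to cover all pairs of the list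
outside the 4-cycle, each pair once, the result is not 6-colourable. -/
def noCompletion : List (ℕ × ℕ) → List Tri → Bool
  | [], cs => uncolorable cs 0 0
  | p :: ps, cs =>
    if isLeave p.1 p.2 || covered cs p.1 p.2 then noCompletion ps cs
    else (List.range 11).all fun z =>
      z == p.1 || z == p.2 || isLeave p.1 z || isLeave p.2 z ||
        covered cs p.1 z || covered cs p.2 z || noCompletion ps ((p.1, p.2, z) :: cs)

/-- The pairs `(x, y)` with `x < y < 11`. -/
def allPairs : List (ℕ × ℕ) :=
  (List.range 11).flatMap fun x => ((List.range 11).filter fun y => x < y).map fun y => (x, y)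

/-- The triples that a suitable labelling puts into every packing with 17 triples. -/
def startTriples : List Tri :=
  [(2, 6, 7), (0, 9, 10), (0, 7, 8), (0, 5, 6), (0, 2, 4)]

theorem noCompletion_start : noCompletion allPairs startTriples = true := by
  decide +kernel

theorem bitAt_eq (M i : ℕ) : bitAt M i = M.testBit i := by
  have h : Nat.land 1 (Nat.shiftRight M i) = M / 2 ^ i % 2 := by
    change 1 &&& (M >>> i) = _
    rw [Nat.land_comm, Nat.and_one_is_mod, Nat.shiftRight_eq_div_pow]
  rw [bitAt, h, Nat.testBit_eq_decide_div_mod_eq]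
  rcases Nat.mod_two_eq_zero_or_one (M / 2 ^ i) with h | h <;> rw [h] <;> rfl

/-- All three labels of the triple are below `11`. -/
def Tri.Valid (t : Tri) : Prop := t.1 < 11 ∧ t.2.1 < 11 ∧ t.2.2 < 11

theorem mem_toSet {e : ℕ → Fin 11} (he : ∀ x < 11, ∀ y < 11, e x = e y → x = y)
    {t : Tri} (ht : t.Valid) {x : ℕ} (hx : x < 11) : e x ∈ t.toSet e ↔ t.has x = true := by
  obtain ⟨h1, h2, h3⟩ := ht
  simp only [Tri.toSet, Tri.has, Finset.mem_insert, Finset.mem_singleton, Bool.or_eq_true,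
    beq_iff_eq, or_assoc]
  refine or_congr ⟨fun h => (he _ hx _ h1 h).symm, fun h => by rw [h]⟩
    (or_congr ⟨fun h => (he _ hx _ h2 h).symm, fun h => by rw [h]⟩
      ⟨fun h => (he _ hx _ h3 h).symm, fun h => by rw [h]⟩)

/-- Soundness of `uncolorable`, with the invariant of the search: `K` gives the colours of the
classes in use, and each bit set in `M` comes from a triple placed earlier in that class. -/
theorem uncolorable_sound {𝒯 : Finset (Finset (Fin 11))} {col : Finset (Fin 11) → Fin 6}
    (hdisj : ∀ S ∈ 𝒯, ∀ T ∈ 𝒯, col S = col T → S ≠ T → Disjoint S T)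
    {e : ℕ → Fin 11} (he : ∀ x < 11, ∀ y < 11, e x = e y → x = y) :
    ∀ (ts : List Tri) (M n : ℕ) (K : ℕ → Fin 6),
      (∀ t ∈ ts, t.Valid ∧ t.toSet e ∈ 𝒯) → (ts.map (Tri.toSet e)).Nodup →
      (∀ j, ∀ x < 11, M.testBit (11 * j + x) = true →
        j < n ∧ ∃ S ∈ 𝒯, S ∉ ts.map (Tri.toSet e) ∧ e x ∈ S ∧ col S = K j) →
      (∀ i < n, ∀ j < n, K i = K j → i = j) →
      uncolorable ts M n = true → False := by
  intro ts
  induction ts with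
  | nil => intro M n K _ _ _ _ h; simp [uncolorable] at h
  | cons t ts ih =>
    intro M n K hts hnd hM hK h
    obtain ⟨htv, htT⟩ := hts t (by simp)
    rw [List.map_cons, List.nodup_cons] at hnd
    -- The class of `t` is an old one, or the next unused one (and then `K` is extended to it).
    obtain ⟨K', j, hjn, hKj, hag, hK'⟩ : ∃ (K' : ℕ → Fin 6) (j : ℕ),
        j < (if j = n then n + 1 else n) ∧ K' j = col (t.toSet e) ∧ (∀ i < n, K' i = K i) ∧
        (∀ i < (if j = n then n + 1 else n), ∀ i' < (if j = n then n + 1 else n),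
          K' i = K' i' → i = i') := by
      by_cases hc : ∃ j < n, K j = col (t.toSet e)
      · obtain ⟨j, hj, hjc⟩ := hc
        refine ⟨K, j, ?_, hjc, fun _ _ => rfl, ?_⟩
        · rw [if_neg hj.ne]; exact hj
        · rw [if_neg hj.ne]; exact hK
      · push Not at hc
        refine ⟨Function.update K n (col (t.toSet e)), n, by simp, by simp, ?_, ?_⟩
        · intro i hi; rw [Function.update_of_ne hi.ne]
        · rw [if_pos rfl]
          intro i hi i' hi' hii
          by_cases h1 : i = n <;> by_cases h2 : i' = n
          · omega
          · subst h1; rw [Function.update_self, Function.update_of_ne h2] at hii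
            exact absurd hii.symm (hc i' (by omega))
          · subst h2; rw [Function.update_self, Function.update_of_ne h1] at hii
            exact absurd hii (hc i (by omega))
          · rw [Function.update_of_ne h1, Function.update_of_ne h2] at hii
            exact hK i (by omega) i' (by omega) hii
    have hle6 : (if j = n then n + 1 else n) ≤ 6 := by
      have := Finset.card_le_card_of_injOn (s := Finset.range (if j = n then n + 1 else n))
        (t := (Finset.univ : Finset (Fin 6))) K' (by simp) (by
          intro i hi i' hi' hii
          exact hK' i (by simpa using hi) i' (by simpa using hi') hii)
      simpa using this
    have hjlt : j < min (n + 1) 6 := by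
      split_ifs at hjn hle6 <;> omega
    rw [uncolorable, List.all_eq_true] at h
    have hj := h j (List.mem_range.2 hjlt)
    -- No point of `t` is occupied in class `j`, since classes consist of disjoint triples.
    have hfree : ∀ x < 11, t.has x = true → M.testBit (11 * j + x) = false := by
      intro x hx hxt
      by_contra hb
      obtain ⟨hjn', S, hS, hSt, hxS, hcS⟩ := hM j x hx (by simpa using hb)
      have hne : S ≠ t.toSet e := fun hh => hSt (by simp [hh])
      have := hdisj S hS _ htT (by rw [hcS, ← hKj, hag j hjn']) hne
      exact Finset.disjoint_left.1 this hxS ((mem_toSet he htv hx).2 hxt)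
    simp only [bitAt_eq] at hj
    rw [hfree _ htv.1 (by simp [Tri.has]), hfree _ htv.2.1 (by simp [Tri.has]),
      hfree _ htv.2.2 (by simp [Tri.has])] at hj
    simp only [Bool.false_or, beq_iff_eq] at hj
    refine ih _ _ K' (fun t' ht' => hts t' (by simp [ht'])) hnd.2 ?_ hK' hj
    intro i x hx hbit
    have hcase : M.testBit (11 * i + x) = true ∨ (i = j ∧ t.has x = true) := by
      obtain ⟨h1, h2, h3⟩ := htv
      simp only [Nat.testBit_or, Nat.testBit_two_pow, Bool.or_eq_true, decide_eq_true_eq] at hbit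
      simp only [Tri.has, Bool.or_eq_true, beq_iff_eq]
      rcases hbit with ((hb | hb) | hb) | hb
      · exact Or.inl hb
      all_goals right; omega
    rcases hcase with hb | ⟨rfl, hxt⟩
    · obtain ⟨hin, S, hS, hSt, hxS, hcS⟩ := hM i x hx hb
      refine ⟨by split_ifs <;> omega, S, hS, fun hh => hSt (by
        rw [List.map_cons]; exact List.mem_cons_of_mem _ hh), hxS, by rw [hcS, hag i hin]⟩
    · exact ⟨hjn, t.toSet e, htT, hnd.1, (mem_toSet he htv hx).2 hxt, hKj.symm⟩

/-- A family of triples on eleven points, any two sharing at most one point. -/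
structure TriPack (𝒯 : Finset (Finset (Fin 11))) : Prop where
  card_three : ∀ T ∈ 𝒯, T.card = 3
  pair : ∀ S ∈ 𝒯, ∀ T ∈ 𝒯, ∀ x y, x ≠ y → x ∈ S → y ∈ S → x ∈ T → y ∈ T → S = T

theorem TriPack.third {𝒯 : Finset (Finset (Fin 11))} (h𝒯 : TriPack 𝒯) {x y : Fin 11}
    (hxy : x ≠ y) (hc : ∃ T ∈ 𝒯, x ∈ T ∧ y ∈ T) :
    ∃ z, z ≠ x ∧ z ≠ y ∧ ({x, y, z} : Finset (Fin 11)) ∈ 𝒯 := by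
  obtain ⟨T, hT, hx, hy⟩ := hc
  have h3 := h𝒯.card_three T hT
  obtain ⟨z, hz⟩ : ((T.erase x).erase y).Nonempty := by
    rw [← Finset.card_pos, Finset.card_erase_of_mem (by simp [hy, hxy.symm]),
      Finset.card_erase_of_mem hx, h3]
    norm_num
  simp only [Finset.mem_erase] at hz
  refine ⟨z, hz.2.1, hz.1, ?_⟩
  have : ({x, y, z} : Finset (Fin 11)) = T := by
    apply Finset.eq_of_subset_of_card_le
    · intro w; simp only [Finset.mem_insert, Finset.mem_singleton]
      rintro (rfl | rfl | rfl)
      exacts [hx, hy, hz.2.2]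
    · rw [h3, Finset.card_eq_three.2 ⟨x, y, z, hxy, hz.2.1.symm, hz.1.symm, rfl⟩]
  rwa [this]

/-- Soundness of `noCompletion`: a 6-coloured packing whose uncovered pairs are exactly those of
`isLeave` tells the search which third point to choose at each pair of labels not yet covered. -/
theorem noCompletion_sound {𝒯 : Finset (Finset (Fin 11))} (h𝒯 : TriPack 𝒯)
    {col : Finset (Fin 11) → Fin 6}
    (hdisj : ∀ S ∈ 𝒯, ∀ T ∈ 𝒯, col S = col T → S ≠ T → Disjoint S T)
    {e : ℕ → Fin 11} (he : ∀ x < 11, ∀ y < 11, e x = e y → x = y)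
    (hsurj : ∀ u, ∃ x < 11, e x = u)
    (hcov : ∀ x < 11, ∀ y < 11, x ≠ y → isLeave x y = false → ∃ T ∈ 𝒯, e x ∈ T ∧ e y ∈ T)
    (hlv : ∀ x < 11, ∀ y < 11, isLeave x y = true → ∀ T ∈ 𝒯, ¬(e x ∈ T ∧ e y ∈ T)) :
    ∀ (ps : List (ℕ × ℕ)) (cs : List Tri),
      (∀ p ∈ ps, p.1 < 11 ∧ p.2 < 11 ∧ p.1 ≠ p.2) →
      (∀ t ∈ cs, t.Valid ∧ t.toSet e ∈ 𝒯) → (cs.map (Tri.toSet e)).Nodup →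
      noCompletion ps cs = true → False := by
  intro ps
  induction ps with
  | nil =>
    intro cs _ hcs hnd h
    exact uncolorable_sound hdisj he cs 0 0 (fun _ => 0) hcs hnd (by simp) (by simp) h
  | cons p ps ih =>
    rintro cs hps hcs hnd h
    obtain ⟨x, y⟩ := p
    obtain ⟨hx, hy, hxy⟩ : x < 11 ∧ y < 11 ∧ x ≠ y := hps (x, y) (by simp)
    have hps' : ∀ p ∈ ps, p.1 < 11 ∧ p.2 < 11 ∧ p.1 ≠ p.2 := fun p hp => hps p (by simp [hp])
    rw [noCompletion] at h
    dsimp only at h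
    split_ifs at h with hc
    · exact ih cs hps' hcs hnd h
    · simp only [Bool.or_eq_true, not_or, Bool.not_eq_true] at hc
      obtain ⟨hl, hnc⟩ := hc
      obtain ⟨u, hux, huy, huT⟩ :=
        h𝒯.third (fun hh => hxy (he x hx y hy hh)) (hcov x hx y hy hxy hl)
      obtain ⟨z, hz, rfl⟩ := hsurj u
      have hzx : z ≠ x := fun hh => hux (by rw [hh])
      have hzy : z ≠ y := fun hh => huy (by rw [hh])
      rw [covered, List.any_eq_false] at hnc
      have hnot : ∀ t ∈ cs, t.toSet e ≠ {e x, e y, e z} := by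
        intro t ht hh
        refine hnc t ht ?_
        rw [Bool.and_eq_true, ← mem_toSet he (hcs t ht).1 hx, ← mem_toSet he (hcs t ht).1 hy, hh]
        simp
      have hncov : ∀ w < 11, w ≠ z → e w ∈ ({e x, e y, e z} : Finset (Fin 11)) →
          covered cs w z = false := by
        intro w hw hwz hwm
        rw [covered, List.any_eq_false]
        intro t ht hh
        rw [Bool.and_eq_true, ← mem_toSet he (hcs t ht).1 hw,
          ← mem_toSet he (hcs t ht).1 hz] at hh
        exact hnot t ht (h𝒯.pair _ (hcs t ht).2 _ huT (e w) (e z)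
          (fun h' => hwz (he w hw z hz h')) hh.1 hh.2 hwm (by simp))
      have hnl : ∀ w < 11, e w ∈ ({e x, e y, e z} : Finset (Fin 11)) → isLeave w z = false := by
        intro w hw hwm
        by_contra hh
        exact hlv w hw z hz (by simpa using hh) _ huT ⟨hwm, by simp⟩
      rw [List.all_eq_true] at h
      have hz' := h z (List.mem_range.2 hz)
      rw [hncov x hx hzx.symm (by simp), hncov y hy hzy.symm (by simp), hnl x hx (by simp),
        hnl y hy (by simp), beq_false_of_ne hzx, beq_false_of_ne hzy] at hz'
      simp only [Bool.false_or] at hz'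
      refine ih _ hps' ?_ ?_ hz'
      · intro t ht
        rcases List.mem_cons.1 ht with rfl | ht
        · exact ⟨⟨hx, hy, hz⟩, huT⟩
        · exact hcs t ht
      · rw [List.map_cons, List.nodup_cons]
        refine ⟨?_, hnd⟩
        rw [List.mem_map]
        rintro ⟨t, ht, hh⟩
        exact hnot t ht hh

/-! ### Uncovered pairs of a packing of triples -/

/-- The points `y ≠ x` for which no triple contains `x` and `y`. -/
def leave (𝒯 : Finset (Finset (Fin 11))) (x : Fin 11) : Finset (Fin 11) :=
  univ.filter fun y => y ≠ x ∧ ∀ T ∈ 𝒯, ¬(x ∈ T ∧ y ∈ T)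

theorem mem_leave {𝒯 : Finset (Finset (Fin 11))} {x y : Fin 11} :
    y ∈ leave 𝒯 x ↔ y ≠ x ∧ ∀ T ∈ 𝒯, ¬(x ∈ T ∧ y ∈ T) := by
  simp [leave]

theorem leave_symm {𝒯 : Finset (Finset (Fin 11))} {x y : Fin 11} (h : y ∈ leave 𝒯 x) :
    x ∈ leave 𝒯 y := by
  rw [mem_leave] at h ⊢
  exact ⟨h.1.symm, fun T hT hh => h.2 T hT hh.symm⟩

/-- The triples through `x` partition the points joined to `x` into pairs. -/
theorem TriPack.card_leave {𝒯 : Finset (Finset (Fin 11))} (h𝒯 : TriPack 𝒯) (x : Fin 11) :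
    (leave 𝒯 x).card + 2 * (𝒯.filter (x ∈ ·)).card = 10 := by
  have hN : ((𝒯.filter (x ∈ ·)).biUnion fun T => T.erase x).card
      = 2 * (𝒯.filter (x ∈ ·)).card := by
    rw [Finset.card_biUnion]
    · rw [Finset.sum_congr rfl (g := fun _ => 2), Finset.sum_const, smul_eq_mul, mul_comm]
      intro T hT
      rw [Finset.mem_filter] at hT
      rw [Finset.card_erase_of_mem hT.2, h𝒯.card_three T hT.1]
    · intro S hS T hT hne
      rw [Finset.mem_coe, Finset.mem_filter] at hS hT
      rw [Function.onFun, Finset.disjoint_left]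
      intro y hyS hyT
      rw [Finset.mem_erase] at hyS hyT
      exact hne (h𝒯.pair S hS.1 T hT.1 x y hyS.1.symm hS.2 hyS.2 hT.2 hyT.2)
  rw [← hN, ← Finset.card_union_of_disjoint]
  · have : leave 𝒯 x ∪ ((𝒯.filter (x ∈ ·)).biUnion fun T => T.erase x) = univ.erase x := by
      ext y
      simp only [Finset.mem_union, mem_leave, Finset.mem_biUnion, Finset.mem_filter,
        Finset.mem_erase, Finset.mem_univ, and_true]
      constructor
      · rintro (h | ⟨T, -, h, -⟩)
        exacts [h.1, h]
      · intro hy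
        by_cases hc : ∃ T ∈ 𝒯, x ∈ T ∧ y ∈ T
        · obtain ⟨T, hT, hx, hy'⟩ := hc
          exact Or.inr ⟨T, ⟨hT, hx⟩, hy, hy'⟩
        · push Not at hc
          exact Or.inl ⟨hy, fun T hT hh => hc T hT hh.1 hh.2⟩
    rw [this, Finset.card_erase_of_mem (Finset.mem_univ x)]
    simp
  · rw [Finset.disjoint_left]
    intro y hy hy'
    simp only [Finset.mem_biUnion, Finset.mem_filter, Finset.mem_erase] at hy'
    obtain ⟨T, ⟨hT, hx⟩, -, hyT⟩ := hy'
    exact (mem_leave.1 hy).2 T hT ⟨hx, hyT⟩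

theorem TriPack.sum_leave {𝒯 : Finset (Finset (Fin 11))} (h𝒯 : TriPack 𝒯) :
    ∑ x, (leave 𝒯 x).card + 6 * 𝒯.card = 110 := by
  have h1 : ∑ x : Fin 11, (𝒯.filter (x ∈ ·)).card = 3 * 𝒯.card := by
    have := Finset.sum_card_bipartiteAbove_eq_sum_card_bipartiteBelow
      (s := (univ : Finset (Fin 11))) (t := 𝒯) (fun x T => x ∈ T)
    simp only [Finset.bipartiteAbove, Finset.bipartiteBelow] at this
    rw [this, Finset.sum_congr rfl (g := fun _ => 3), Finset.sum_const, smul_eq_mul, mul_comm]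
    intro T hT
    rw [← h𝒯.card_three T hT]
    congr 1
    ext y; simp
  have h2 : ∑ x : Fin 11, ((leave 𝒯 x).card + 2 * (𝒯.filter (x ∈ ·)).card) = ∑ _x : Fin 11, 10 :=
    Finset.sum_congr rfl fun x _ => h𝒯.card_leave x
  rw [Finset.sum_add_distrib, ← Finset.mul_sum, h1] at h2
  simp at h2
  omega

theorem TriPack.two_le_leave {𝒯 : Finset (Finset (Fin 11))} (h𝒯 : TriPack 𝒯) {x y : Fin 11}
    (h : y ∈ leave 𝒯 x) : 2 ≤ (leave 𝒯 x).card := by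
  have h1 := h𝒯.card_leave x
  have h2 := Finset.card_pos.2 ⟨y, h⟩
  omega

/-- The uncovered pairs form a graph with even degrees; it cannot have exactly one edge. -/
theorem TriPack.card_le {𝒯 : Finset (Finset (Fin 11))} (h𝒯 : TriPack 𝒯) : 𝒯.card ≤ 17 := by
  have hs := h𝒯.sum_leave
  by_contra hlt
  have h2 : ∑ x, (leave 𝒯 x).card = 2 := by omega
  obtain ⟨x, -, hx⟩ : ∃ x ∈ (univ : Finset (Fin 11)), (leave 𝒯 x).card ≠ 0 := by
    apply Finset.exists_ne_zero_of_sum_ne_zero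
    omega
  obtain ⟨y, hy⟩ := Finset.card_pos.1 (Nat.pos_of_ne_zero hx)
  have hxy := (mem_leave.1 hy).1
  have h3 : ∑ z ∈ {x, y}, (leave 𝒯 z).card ≤ ∑ z, (leave 𝒯 z).card :=
    Finset.sum_le_sum_of_subset (Finset.subset_univ _)
  rw [Finset.sum_pair hxy.symm] at h3
  have := h𝒯.two_le_leave hy
  have := h𝒯.two_le_leave (leave_symm hy)
  omega

/-- With 17 triples, the four uncovered pairs form a 4-cycle: the only graph with four edges and
even degrees. -/
theorem TriPack.leave_cycle {𝒯 : Finset (Finset (Fin 11))} (h𝒯 : TriPack 𝒯)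
    (h17 : 𝒯.card = 17) :
    ∃ a b c d : Fin 11, [a, b, c, d].Nodup ∧ leave 𝒯 a = {b, d} ∧ leave 𝒯 b = {a, c} ∧
      leave 𝒯 c = {b, d} ∧ leave 𝒯 d = {a, c} ∧
      ∀ x, x ∉ [a, b, c, d] → leave 𝒯 x = ∅ := by
  have hs := h𝒯.sum_leave
  have h8 : ∑ x, (leave 𝒯 x).card = 8 := by omega
  set D : Finset (Fin 11) := univ.filter fun x => (leave 𝒯 x).card ≠ 0 with hD
  have hsumD : ∑ x ∈ D, (leave 𝒯 x).card = 8 := by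
    rw [hD, Finset.sum_filter_ne_zero, h8]
  have hmem : ∀ {x y}, y ∈ leave 𝒯 x → x ∈ D := by
    intro x y h
    rw [hD, Finset.mem_filter]
    exact ⟨Finset.mem_univ _, (Finset.card_pos.2 ⟨y, h⟩).ne'⟩
  have hge : ∀ x ∈ D, 2 ≤ (leave 𝒯 x).card := by
    intro x hx
    obtain ⟨y, hy⟩ := Finset.card_pos.1 (Nat.pos_of_ne_zero (Finset.mem_filter.1 hx).2)
    exact h𝒯.two_le_leave hy
  have hD4 : D.card ≤ 4 := by
    have := Finset.card_nsmul_le_sum D (fun x => (leave 𝒯 x).card) 2 hge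
    rw [hsumD, smul_eq_mul] at this
    omega
  have hsub : ∀ x, leave 𝒯 x ⊆ D.erase x := by
    intro x y hy
    exact Finset.mem_erase.2 ⟨(mem_leave.1 hy).1, hmem (leave_symm hy)⟩
  have htwo : ∀ x ∈ D, (leave 𝒯 x).card = 2 := by
    intro x hx
    have h1 := Finset.card_le_card (hsub x)
    rw [Finset.card_erase_of_mem hx] at h1
    have h2 := hge x hx
    have h3 := h𝒯.card_leave x
    omega
  have hDc : D.card = 4 := by
    rw [Finset.sum_congr rfl htwo, Finset.sum_const, smul_eq_mul] at hsumD
    omega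
  obtain ⟨a, ha⟩ : D.Nonempty := Finset.card_pos.1 (by omega)
  obtain ⟨b, d, hbd, hLa⟩ := Finset.card_eq_two.1 (htwo a ha)
  have hb : b ∈ leave 𝒯 a := by simp [hLa]
  have hd : d ∈ leave 𝒯 a := by simp [hLa]
  have hab := (mem_leave.1 hb).1
  have had := (mem_leave.1 hd).1
  have hbD := hmem (leave_symm hb)
  have hdD := hmem (leave_symm hd)
  have hsubD : ({a, b, d} : Finset (Fin 11)) ⊆ D := by
    intro x; simp only [Finset.mem_insert, Finset.mem_singleton]
    rintro (rfl | rfl | rfl) <;> assumption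
  have hc3 : ({a, b, d} : Finset (Fin 11)).card = 3 :=
    Finset.card_eq_three.2 ⟨a, b, d, hab.symm, had.symm, hbd, rfl⟩
  obtain ⟨c, hcD, hc⟩ : ∃ c ∈ D, c ∉ ({a, b, d} : Finset (Fin 11)) := by
    by_contra hcon
    push Not at hcon
    have := Finset.card_le_card (show D ⊆ {a, b, d} from hcon)
    omega
  simp only [Finset.mem_insert, Finset.mem_singleton, not_or] at hc
  obtain ⟨hca, hcb, hcd⟩ := hc
  have hnd : [a, b, c, d].Nodup := by
    simp [hab.symm, had.symm, hbd, Ne.symm hca, Ne.symm hcb, hcd]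
  have hDeq : ({a, b, c, d} : Finset (Fin 11)) = D := by
    apply Finset.eq_of_subset_of_card_le
    · intro x; simp only [Finset.mem_insert, Finset.mem_singleton]
      rintro (rfl | rfl | rfl | rfl) <;> assumption
    · rw [hDc]
      have := List.toFinset_card_of_nodup hnd
      simp at this
      omega
  have hLc : leave 𝒯 c = {b, d} := by
    apply Finset.eq_of_subset_of_card_le
    · intro x hx
      have h1 := hsub c hx
      rw [← hDeq] at h1
      simp only [Finset.mem_erase, Finset.mem_insert, Finset.mem_singleton] at h1 ⊢
      rcases h1 with ⟨h2, rfl | rfl | rfl | rfl⟩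
      · have := leave_symm hx
        rw [hLa] at this
        simp [hcb, hcd] at this
      · simp
      · exact absurd rfl h2
      · simp
    · rw [htwo c hcD, Finset.card_pair hbd]
  have hac : ∀ y ∈ D, a ∈ leave 𝒯 y → c ∈ leave 𝒯 y → leave 𝒯 y = {a, c} := by
    intro y hy h1 h2
    symm
    apply Finset.eq_of_subset_of_card_le
    · intro x; simp only [Finset.mem_insert, Finset.mem_singleton]
      rintro (rfl | rfl) <;> assumption
    · rw [htwo y hy, Finset.card_pair (Ne.symm hca)]
  refine ⟨a, b, c, d, hnd, hLa, hac b hbD (leave_symm hb) (leave_symm (by simp [hLc])), hLc,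
    hac d hdD (leave_symm hd) (leave_symm (by simp [hLc])), ?_⟩
  intro x hx
  by_contra hne
  obtain ⟨y, hy⟩ := Finset.nonempty_iff_ne_empty.2 hne
  have := hmem hy
  rw [← hDeq] at this
  exact hx (by simpa using this)

set_option maxHeartbeats 400000 in
/-- A labelling of the points of a packing with 17 triples: the uncovered pairs form the cycle
`a b c d`, and all four triples through `a` and one more triple through `c` are as displayed. -/
theorem TriPack.exists_labelling {𝒯 : Finset (Finset (Fin 11))} (h𝒯 : TriPack 𝒯)
    (h17 : 𝒯.card = 17) :
    ∃ a b c d s p₁ q₁ p₂ q₂ p₃ q₃ : Fin 11,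
      [a, b, c, d, s, p₁, q₁, p₂, q₂, p₃, q₃].Nodup ∧
      (leave 𝒯 a = {b, d} ∧ leave 𝒯 b = {a, c} ∧ leave 𝒯 c = {b, d} ∧ leave 𝒯 d = {a, c} ∧
        ∀ x, x ∉ [a, b, c, d] → leave 𝒯 x = ∅) ∧
      {a, c, s} ∈ 𝒯 ∧ {a, p₁, q₁} ∈ 𝒯 ∧ {a, p₂, q₂} ∈ 𝒯 ∧ {a, p₃, q₃} ∈ 𝒯 ∧
      {c, q₁, p₂} ∈ 𝒯 := by
  obtain ⟨a, b, c, d, hnd, hLa, hLb, hLc, hLd, hL⟩ := h𝒯.leave_cycle h17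
  have hthird : ∀ x y, x ≠ y → y ∉ leave 𝒯 x →
      ∃ z, z ≠ x ∧ z ≠ y ∧ ({x, y, z} : Finset (Fin 11)) ∈ 𝒯 ∧ z ∉ leave 𝒯 x := by
    intro x y hxy hy
    have hc : ∃ T ∈ 𝒯, x ∈ T ∧ y ∈ T := by
      by_contra hcon
      push Not at hcon
      exact hy (mem_leave.2 ⟨hxy.symm, fun T hT hh => hcon T hT hh.1 hh.2⟩)
    obtain ⟨z, hzx, hzy, hz⟩ := h𝒯.third hxy hc
    exact ⟨z, hzx, hzy, hz, fun hh => (mem_leave.1 hh).2 _ hz (by simp)⟩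
  have hshare : ∀ {x y z y' z' : Fin 11}, ({x, y, z} : Finset (Fin 11)) ∈ 𝒯 →
      ({x, y', z'} : Finset (Fin 11)) ∈ 𝒯 → z' ≠ x → (z' = y ∨ z' = z) →
      (y' = x ∨ y' = y ∨ y' = z) := by
    intro x y z y' z' h1 h2 hne hw
    have h := h𝒯.pair _ h1 _ h2 x z' hne.symm (by simp) (by rcases hw with rfl | rfl <;> simp)
      (by simp) (by simp)
    have : y' ∈ ({x, y, z} : Finset (Fin 11)) := by rw [h]; simp
    simpa using this
  simp only [List.nodup_cons, List.mem_cons, List.not_mem_nil, or_false, not_or,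
    not_false_eq_true, List.nodup_nil, and_true] at hnd
  obtain ⟨⟨hab, hac, had⟩, ⟨hbc, hbd⟩, hcd⟩ := hnd
  have hstepa : ∀ p, p ∉ [a, b, c, d] → ∃ q, ({a, p, q} : Finset (Fin 11)) ∈ 𝒯 ∧ q ∉ [a, b, d, p] := by
    intro p hp
    simp only [List.mem_cons, List.not_mem_nil, or_false, not_or] at hp
    obtain ⟨q, h1, h2, h3, h4⟩ := hthird a p (Ne.symm hp.1) (by rw [hLa]; simp [hp])
    rw [hLa] at h4
    simp only [Finset.mem_insert, Finset.mem_singleton, not_or] at h4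
    exact ⟨q, h3, by simp [h1, h2, h4]⟩
  have hstepc : ∀ p, p ∉ [a, b, c, d] → ∃ q, ({c, p, q} : Finset (Fin 11)) ∈ 𝒯 ∧ q ∉ [c, b, d, p] := by
    intro p hp
    simp only [List.mem_cons, List.not_mem_nil, or_false, not_or] at hp
    obtain ⟨q, h1, h2, h3, h4⟩ := hthird c p (Ne.symm hp.2.2.1) (by rw [hLc]; simp [hp])
    rw [hLc] at h4
    simp only [Finset.mem_insert, Finset.mem_singleton, not_or] at h4
    exact ⟨q, h3, by simp [h1, h2, h4]⟩
  have hnew : ∀ l : List (Fin 11), l.length < 11 → ∃ p, p ∉ l := by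
    intro l hl
    by_contra hcon
    push Not at hcon
    have h1 := Finset.card_le_card
      (show (univ : Finset (Fin 11)) ⊆ l.toFinset from fun x _ => by simpa using hcon x)
    have h2 := List.toFinset_card_le l
    simp only [Finset.card_univ, Fintype.card_fin] at h1
    omega
  obtain ⟨s, hsa, hsc, hsT, hs⟩ := hthird a c hac (by
    rw [hLa]; simp [hcd, Ne.symm hbc])
  rw [hLa] at hs
  simp only [Finset.mem_insert, Finset.mem_singleton, not_or] at hs
  have hsT' : ({c, a, s} : Finset (Fin 11)) ∈ 𝒯 := by
    rwa [Finset.insert_comm]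
  obtain ⟨p₁, hp₁⟩ := hnew [a, b, c, d, s] (by simp)
  obtain ⟨q₁, hT₁, hq₁⟩ := hstepa p₁ (by simp at hp₁ ⊢; tauto)
  simp only [List.mem_cons, List.not_mem_nil, or_false, not_or] at hp₁ hq₁
  have hq₁' : q₁ ≠ c ∧ q₁ ≠ s := by
    rw [← not_or]; intro h; have := hshare hsT hT₁ hq₁.1 h; grind
  obtain ⟨p₂, hT₂, hp₂⟩ := hstepc q₁ (by simp; tauto)
  simp only [List.mem_cons, List.not_mem_nil, or_false, not_or] at hp₂
  have hp₂' : p₂ ≠ a ∧ p₂ ≠ s := by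
    rw [← not_or]; intro h; have := hshare hsT' hT₂ hp₂.1 h; grind
  have hp₂₁ : p₂ ≠ p₁ := by
    rintro rfl
    have h := h𝒯.pair _ hT₁ _ hT₂ p₂ q₁ (by tauto) (by simp) (by simp) (by simp) (by simp)
    have hc : c ∈ ({a, p₂, q₁} : Finset (Fin 11)) := by rw [h]; simp
    simp only [Finset.mem_insert, Finset.mem_singleton] at hc
    grind
  obtain ⟨q₂, hT₃, hq₂⟩ := hstepa p₂ (by simp; grind)
  simp only [List.mem_cons, List.not_mem_nil, or_false, not_or] at hq₂
  have hq₂' : q₂ ≠ c ∧ q₂ ≠ s := by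
    rw [← not_or]; intro h; have := hshare hsT hT₃ hq₂.1 h; grind
  have hq₂₁ : q₂ ≠ p₁ ∧ q₂ ≠ q₁ := by
    rw [← not_or]; intro h; have := hshare hT₁ hT₃ hq₂.1 h; grind
  obtain ⟨p₃, hp₃⟩ := hnew [a, b, c, d, s, p₁, q₁, p₂, q₂] (by simp)
  obtain ⟨q₃, hT₄, hq₃⟩ := hstepa p₃ (by simp at hp₃ ⊢; tauto)
  simp only [List.mem_cons, List.not_mem_nil, or_false, not_or] at hp₃ hq₃
  have hq₃' : q₃ ≠ c ∧ q₃ ≠ s := by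
    rw [← not_or]; intro h; have := hshare hsT hT₄ hq₃.1 h; grind
  have hq₃₁ : q₃ ≠ p₁ ∧ q₃ ≠ q₁ := by
    rw [← not_or]; intro h; have := hshare hT₁ hT₄ hq₃.1 h; grind
  have hq₃₂ : q₃ ≠ p₂ ∧ q₃ ≠ q₂ := by
    rw [← not_or]; intro h; have := hshare hT₃ hT₄ hq₃.1 h; grind
  refine ⟨a, b, c, d, s, p₁, q₁, p₂, q₂, p₃, q₃, ?_, ⟨hLa, hLb, hLc, hLd, hL⟩,
    hsT, hT₁, hT₃, hT₄, hT₂⟩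
  clear hthird hshare hstepa hstepc hnew hL hLa hLb hLc hLd hsT hsT' hT₁ hT₂ hT₃ hT₄ h𝒯 h17
  simp only [List.nodup_cons, List.mem_cons, List.not_mem_nil, or_false, not_or,
    not_false_eq_true, List.nodup_nil, and_true]
  grind

theorem TriPack.not_six_colorable {𝒯 : Finset (Finset (Fin 11))} (h𝒯 : TriPack 𝒯)
    (h17 : 𝒯.card = 17) (col : Finset (Fin 11) → Fin 6)
    (hdisj : ∀ S ∈ 𝒯, ∀ T ∈ 𝒯, col S = col T → S ≠ T → Disjoint S T) : False := by
  obtain ⟨a, b, c, d, s, p₁, q₁, p₂, q₂, p₃, q₃, hall, ⟨hLa, hLb, hLc, hLd, hL⟩,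
    hsT, hT₁, hT₃, hT₄, hT₂⟩ := h𝒯.exists_labelling h17
  set l := [a, b, c, d, s, p₁, q₁, p₂, q₂, p₃, q₃] with hl
  have hlen : l.length = 11 := by simp [hl]
  set e : ℕ → Fin 11 := fun n => l.getD n a with he
  have hinj : ∀ x < 11, ∀ y < 11, e x = e y → x = y := by
    intro x hx y hy h
    simp only [he, List.getD_eq_getElem _ _ (hlen ▸ hx), List.getD_eq_getElem _ _ (hlen ▸ hy)] at h
    exact (hall.getElem_inj_iff).1 h
  have hsurj : ∀ u, ∃ x < 11, e x = u := by
    have hb : Function.Surjective fun i : Fin 11 => e i :=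
      Finite.surjective_of_injective fun i j h => Fin.ext (hinj i i.2 j j.2 h)
    intro u
    obtain ⟨i, hi⟩ := hb u
    exact ⟨i, i.2, hi⟩
  have hcov : ∀ x < 11, ∀ y < 11, x ≠ y → isLeave x y = false → ∃ T ∈ 𝒯, e x ∈ T ∧ e y ∈ T := by
    intro x hx y hy hxy hlv
    by_contra hcon
    push Not at hcon
    have hmem : e y ∈ leave 𝒯 (e x) := mem_leave.2
      ⟨fun h => hxy (hinj y hy x hx h).symm, fun T hT hh => hcon T hT hh.1 hh.2⟩
    by_cases hx4 : e x ∈ [a, b, c, d]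
    · simp only [List.mem_cons, List.not_mem_nil, or_false] at hx4
      rcases hx4 with h | h | h | h
      · rw [h, hLa, Finset.mem_insert, Finset.mem_singleton] at hmem
        have := hinj x hx 0 (by norm_num) h
        subst this
        rcases hmem with h' | h'
        · rw [hinj y hy 1 (by norm_num) h'] at hlv; simp [isLeave] at hlv
        · rw [hinj y hy 3 (by norm_num) h'] at hlv; simp [isLeave] at hlv
      · rw [h, hLb, Finset.mem_insert, Finset.mem_singleton] at hmem
        have := hinj x hx 1 (by norm_num) h
        subst this
        rcases hmem with h' | h'
        · rw [hinj y hy 0 (by norm_num) h'] at hlv; simp [isLeave] at hlv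
        · rw [hinj y hy 2 (by norm_num) h'] at hlv; simp [isLeave] at hlv
      · rw [h, hLc, Finset.mem_insert, Finset.mem_singleton] at hmem
        have := hinj x hx 2 (by norm_num) h
        subst this
        rcases hmem with h' | h'
        · rw [hinj y hy 1 (by norm_num) h'] at hlv; simp [isLeave] at hlv
        · rw [hinj y hy 3 (by norm_num) h'] at hlv; simp [isLeave] at hlv
      · rw [h, hLd, Finset.mem_insert, Finset.mem_singleton] at hmem
        have := hinj x hx 3 (by norm_num) h
        subst this
        rcases hmem with h' | h'
        · rw [hinj y hy 0 (by norm_num) h'] at hlv; simp [isLeave] at hlv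
        · rw [hinj y hy 2 (by norm_num) h'] at hlv; simp [isLeave] at hlv
    · rw [hL _ hx4] at hmem
      simp at hmem
  have hlv : ∀ x < 11, ∀ y < 11, isLeave x y = true → ∀ T ∈ 𝒯, ¬(e x ∈ T ∧ e y ∈ T) := by
    intro x _ y _ h
    have hmem : e y ∈ leave 𝒯 (e x) := by
      simp only [isLeave, List.any_cons, List.any_nil, Bool.or_false, Bool.or_eq_true,
        Bool.and_eq_true, beq_iff_eq] at h
      rcases h with ⟨rfl, rfl⟩ | ⟨rfl, rfl⟩ | ⟨rfl, rfl⟩ | ⟨rfl, rfl⟩ | ⟨rfl, rfl⟩ | ⟨rfl, rfl⟩ |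
        ⟨rfl, rfl⟩ | ⟨rfl, rfl⟩
      · change b ∈ leave 𝒯 a; simp [hLa]
      · change a ∈ leave 𝒯 b; simp [hLb]
      · change c ∈ leave 𝒯 b; simp [hLb]
      · change b ∈ leave 𝒯 c; simp [hLc]
      · change d ∈ leave 𝒯 c; simp [hLc]
      · change c ∈ leave 𝒯 d; simp [hLd]
      · change a ∈ leave 𝒯 d; simp [hLd]
      · change d ∈ leave 𝒯 a; simp [hLa]
    exact (mem_leave.1 hmem).2
  have hvalid : ∀ t ∈ startTriples, t.Valid := by
    simp [startTriples, Tri.Valid]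
  have hstart : ∀ t ∈ startTriples, t.Valid ∧ t.toSet e ∈ 𝒯 := by
    intro t ht
    refine ⟨hvalid t ht, ?_⟩
    simp only [startTriples, List.mem_cons, List.not_mem_nil, or_false] at ht
    rcases ht with rfl | rfl | rfl | rfl | rfl
    exacts [hT₂, hT₄, hT₃, hT₁, hsT]
  have hnodup : (startTriples.map (Tri.toSet e)).Nodup := by
    rw [List.Nodup, List.pairwise_map]
    have hsep : startTriples.Pairwise
        fun t t' => ∃ x ∈ List.range 11, t.has x = true ∧ t'.has x = false := by decide
    refine hsep.imp_of_mem ?_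
    rintro t t' ht ht' ⟨x, hx, h1, h2⟩ h
    rw [List.mem_range] at hx
    rw [← mem_toSet hinj (hvalid t ht) hx, h, mem_toSet hinj (hvalid t' ht') hx, h2] at h1
    exact Bool.false_ne_true h1
  exact noCompletion_sound h𝒯 hdisj hinj hsurj hcov hlv allPairs startTriples
    (by decide) hstart hnodup noCompletion_start

/-! ### Generalized packings as coloured packings of triples -/

/-- The block `(T, {c})`. -/
def mkBlock {v₂ : ℕ} (T : Finset (Fin 11)) (c : Fin v₂) :
    ∀ i : Fin 2, Finset (Fin ((![11, v₂] : Fin 2 → ℕ) i)) :=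
  Fin.cons (α := fun i : Fin 2 => Finset (Fin ((![11, v₂] : Fin 2 → ℕ) i))) T
    fun i => Fin.cons (α := fun i : Fin 1 => Finset (Fin ((![11, v₂] : Fin 2 → ℕ) i.succ)))
      ({c} : Finset (Fin v₂)) (fun i => i.elim0) i

theorem mkBlock_zero {v₂ : ℕ} (T : Finset (Fin 11)) (c : Fin v₂) : mkBlock T c 0 = T := rfl

theorem mkBlock_one {v₂ : ℕ} (T : Finset (Fin 11)) (c : Fin v₂) :
    mkBlock T c 1 = ({c} : Finset (Fin v₂)) := rfl

theorem card_filter_map_le_one {κ α : Type*} [Fintype κ] (f : κ → α) (p : α → Prop)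
    {_ : DecidablePred p} (h : ∀ i j, p (f i) → p (f j) → i = j) :
    (((univ : Finset κ).val.map f).filter p).card ≤ 1 := by
  rw [Multiset.filter_map, Multiset.card_map]
  change (Finset.filter (p ∘ f) univ).card ≤ 1
  rw [Finset.card_le_one]
  intro i hi j hj
  exact h i j (Finset.mem_filter.1 hi).2 (Finset.mem_filter.1 hj).2

/-- Coloured triples, with equal-coloured triples disjoint, form a generalized packing. -/
theorem isGenPacking_of_coloring {v₂ : ℕ} {κ : Type} [Fintype κ]
    (tri : κ → Finset (Fin 11)) (col : κ → Fin v₂) (h3 : ∀ i, (tri i).card = 3)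
    (hpair : ∀ i j, 2 ≤ (tri i ∩ tri j).card → i = j)
    (hdisj : ∀ i j, col i = col j → 1 ≤ (tri i ∩ tri j).card → i = j) :
    IsGenPacking 2 1 ![11, v₂] ![3, 1]
      ((univ : Finset κ).val.map fun i => mkBlock (tri i) (col i)) := by
  refine ⟨?_, ?_⟩
  · intro B hB i
    obtain ⟨k, -, rfl⟩ := Multiset.mem_map.1 hB
    fin_cases i
    · exact h3 k
    · exact Finset.card_singleton (col k)
  · intro t' ht' hsum T hT
    have h1 := ht' 1
    have hT0 : (T 0).card = t' 0 := hT 0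
    have hT1 : (T 1).card = t' 1 := hT 1
    rw [Fin.sum_univ_two] at hsum
    change t' 1 ≤ 1 at h1
    refine card_filter_map_le_one _ _ fun i j hi hj => ?_
    have hle : (T 0).card ≤ (tri i ∩ tri j).card :=
      Finset.card_le_card (Finset.subset_inter (hi 0) (hj 0))
    by_cases ht1 : t' 1 = 0
    · exact hpair i j (by omega)
    · obtain ⟨c, hc⟩ := Finset.card_pos.1 (show 0 < (T 1).card by omega)
      have hci : c ∈ ({col i} : Finset (Fin v₂)) := hi 1 hc
      have hcj : c ∈ ({col j} : Finset (Fin v₂)) := hj 1 hc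
      exact hdisj i j ((Finset.mem_singleton.1 hci).symm.trans (Finset.mem_singleton.1 hcj))
        (by omega)

/-- A multiset whose members satisfying `p` number at most one has at most one such member. -/
theorem eq_of_card_filter_le_one {α : Type*} {P : Multiset α} {p : α → Prop} {_ : DecidablePred p}
    (h : (P.filter p).card ≤ 1) {x y : α} (hx : x ∈ P) (hy : y ∈ P) (px : p x) (py : p y) :
    x = y := by
  by_contra hne
  have hle : ({x, y} : Multiset α) ≤ P.filter p := by
    rw [Multiset.le_iff_subset (by simp [hne])]
    intro z hz
    simp only [Multiset.insert_eq_cons, Multiset.mem_cons, Multiset.mem_singleton] at hz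
    rcases hz with rfl | rfl
    · exact Multiset.mem_filter.2 ⟨hx, px⟩
    · exact Multiset.mem_filter.2 ⟨hy, py⟩
  have := Multiset.card_le_card hle
  simp at this
  omega

theorem count_le_one_of_card_filter {α : Type*} [DecidableEq α] {P : Multiset α} {p : α → Prop}
    {_ : DecidablePred p} (h : (P.filter p).card ≤ 1) {x : α} (px : p x) : P.count x ≤ 1 := by
  rw [← Multiset.count_filter_of_pos (p := p) px]
  exact (Multiset.count_le_card _ _).trans h

/-- Every generalized packing arises from a packing of triples, coloured so that equal-coloured
triples are disjoint. -/
theorem exists_coloring_of_isGenPacking {v₂ : ℕ} (hv : 1 ≤ v₂)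
    {P : Multiset (∀ i : Fin 2, Finset (Fin ((![11, v₂] : Fin 2 → ℕ) i)))}
    (hP : IsGenPacking 2 1 ![11, v₂] ![3, 1] P) :
    ∃ (𝒯 : Finset (Finset (Fin 11))) (col : Finset (Fin 11) → Fin v₂),
      TriPack 𝒯 ∧ 𝒯.card = Multiset.card P ∧
      ∀ S ∈ 𝒯, ∀ T ∈ 𝒯, col S = col T → S ≠ T → Disjoint S T := by
  classical
  obtain ⟨hcard, hpack⟩ := hP
  have hc0 : ∀ B ∈ P, (B 0 : Finset (Fin 11)).card = 3 := fun B hB => hcard B hB 0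
  have hc1 : ∀ B ∈ P, (B 1 : Finset (Fin v₂)).card = 1 := fun B hB => hcard B hB 1
  -- The admissible tuple `(2, 0)`.
  have hpair : ∀ x y : Fin 11, x ≠ y →
      (∀ B ∈ P, ∀ C ∈ P, ({x, y} : Finset (Fin 11)) ⊆ B 0 → ({x, y} : Finset (Fin 11)) ⊆ C 0 →
        B = C) ∧ ∀ B, ({x, y} : Finset (Fin 11)) ⊆ B 0 → P.count B ≤ 1 := by
    intro x y hxy
    have key := hpack ![2, 0] (by intro i; fin_cases i <;> simp) (by simp)
      (Fin.cons (α := fun i : Fin 2 => Finset (Fin ((![11, v₂] : Fin 2 → ℕ) i)))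
        ({x, y} : Finset (Fin 11)) fun _ => ∅) (by
          intro i; fin_cases i
          · exact Finset.card_pair hxy
          · rfl)
    have hsub : ∀ B : (∀ i : Fin 2, Finset (Fin ((![11, v₂] : Fin 2 → ℕ) i))),
        ({x, y} : Finset (Fin 11)) ⊆ B 0 → ∀ i,
        (Fin.cons (α := fun i : Fin 2 => Finset (Fin ((![11, v₂] : Fin 2 → ℕ) i)))
          ({x, y} : Finset (Fin 11)) fun _ => ∅) i ⊆ B i := by
      intro B hB i
      refine Fin.cases ?_ (fun i => ?_) i
      · exact hB
      · exact Finset.empty_subset _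
    exact ⟨fun B hB C hC h1 h2 => eq_of_card_filter_le_one key hB hC (hsub B h1) (hsub C h2),
      fun B h1 => count_le_one_of_card_filter key (hsub B h1)⟩
  -- The admissible tuple `(1, 1)`.
  have hmix : ∀ (x : Fin 11) (c : Fin v₂), ∀ B ∈ P, ∀ C ∈ P,
      x ∈ (B 0 : Finset (Fin 11)) → c ∈ (B 1 : Finset (Fin v₂)) →
      x ∈ (C 0 : Finset (Fin 11)) → c ∈ (C 1 : Finset (Fin v₂)) → B = C := by
    intro x c B hB C hC h1 h2 h3 h4
    have key := hpack ![1, 1] (by intro i; fin_cases i <;> simp) (by simp) (mkBlock {x} c) (by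
          intro i; fin_cases i
          · exact Finset.card_singleton x
          · exact Finset.card_singleton c)
    refine eq_of_card_filter_le_one key hB hC ?_ ?_
    · refine Fin.forall_fin_two.2 ⟨?_, ?_⟩
      exacts [Finset.singleton_subset_iff.2 h1, Finset.singleton_subset_iff.2 h2]
    · refine Fin.forall_fin_two.2 ⟨?_, ?_⟩
      exacts [Finset.singleton_subset_iff.2 h3, Finset.singleton_subset_iff.2 h4]
  have htwo : ∀ B ∈ P, ∃ x y : Fin 11, x ≠ y ∧ ({x, y} : Finset (Fin 11)) ⊆ B 0 := by
    intro B hB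
    have h1 : 1 < (B 0 : Finset (Fin 11)).card := by rw [hc0 B hB]; norm_num
    obtain ⟨x, hx, y, hy, hxy⟩ := Finset.one_lt_card.1 h1
    exact ⟨x, y, hxy, Finset.insert_subset hx (Finset.singleton_subset_iff.2 hy)⟩
  have hnodup : P.Nodup := by
    rw [Multiset.nodup_iff_count_le_one]
    intro B
    by_cases hB : B ∈ P
    · obtain ⟨x, y, hxy, hs⟩ := htwo B hB
      exact (hpair x y hxy).2 B hs
    · rw [Multiset.count_eq_zero_of_notMem hB]; norm_num
  have hinj : ∀ B ∈ P, ∀ C ∈ P, ∀ x y : Fin 11, x ≠ y → x ∈ (B 0 : Finset (Fin 11)) →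
      y ∈ (B 0 : Finset (Fin 11)) → x ∈ (C 0 : Finset (Fin 11)) →
      y ∈ (C 0 : Finset (Fin 11)) → B = C := by
    intro B hB C hC x y hxy h1 h2 h3 h4
    refine (hpair x y hxy).1 B hB C hC ?_ ?_
    · exact Finset.insert_subset h1 (Finset.singleton_subset_iff.2 h2)
    · exact Finset.insert_subset h3 (Finset.singleton_subset_iff.2 h4)
  set F : Finset (∀ i : Fin 2, Finset (Fin ((![11, v₂] : Fin 2 → ℕ) i))) := ⟨P, hnodup⟩ with hF
  have hmemF : ∀ {B}, B ∈ F ↔ B ∈ P := Iff.rfl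
  set 𝒯 : Finset (Finset (Fin 11)) := F.image fun B => (B 0 : Finset (Fin 11)) with h𝒯
  have hex : ∀ S : Finset (Fin 11), ∃ c : Fin v₂,
      S ∈ 𝒯 → ∃ B ∈ P, (B 0 : Finset (Fin 11)) = S ∧ c ∈ (B 1 : Finset (Fin v₂)) := by
    intro S
    by_cases hS : S ∈ 𝒯
    · obtain ⟨B, hB, hBS⟩ := Finset.mem_image.1 hS
      obtain ⟨c, hc⟩ := Finset.card_pos.1 (show 0 < (B 1 : Finset (Fin v₂)).card by
        rw [hc1 B hB]; norm_num)
      exact ⟨c, fun _ => ⟨B, hB, hBS, hc⟩⟩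
    · exact ⟨⟨0, hv⟩, fun h => absurd h hS⟩
  choose col hcol using hex
  refine ⟨𝒯, col, ⟨?_, ?_⟩, ?_, ?_⟩
  · intro S hS
    obtain ⟨B, hB, rfl, -⟩ := hcol S hS
    exact hc0 B hB
  · intro S hS T hT x y hxy h1 h2 h3 h4
    obtain ⟨B, hB, rfl, -⟩ := hcol S hS
    obtain ⟨C, hC, rfl, -⟩ := hcol T hT
    rw [hinj B hB C hC x y hxy h1 h2 h3 h4]
  · refine Finset.card_image_of_injOn (s := F) fun B hB C hC h => ?_
    obtain ⟨x, y, hxy, hs⟩ := htwo B hB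
    have hx : x ∈ (B 0 : Finset (Fin 11)) := hs (by simp)
    have hy : y ∈ (B 0 : Finset (Fin 11)) := hs (by simp)
    have h0 : (B 0 : Finset (Fin 11)) = C 0 := h
    exact hinj B hB C hC x y hxy hx hy (h0 ▸ hx) (h0 ▸ hy)
  · intro S hS T hT hc hne
    rw [Finset.disjoint_left]
    intro x hxS hxT
    obtain ⟨B, hB, hBS, hcB⟩ := hcol S hS
    obtain ⟨C, hC, hCT, hcC⟩ := hcol T hT
    rw [hc] at hcB
    have : B = C := hmix x (col T) B hB C hC (by rw [hBS]; exact hxS) hcB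
      (by rw [hCT]; exact hxT) hcC
    exact hne (by rw [← hBS, ← hCT, this])

/-- Eleven points hold at most three disjoint triples, so each colour is used at most thrice. -/
theorem TriPack.card_le_three_mul {𝒯 : Finset (Finset (Fin 11))} (h𝒯 : TriPack 𝒯) {v₂ : ℕ}
    (col : Finset (Fin 11) → Fin v₂)
    (hdisj : ∀ S ∈ 𝒯, ∀ T ∈ 𝒯, col S = col T → S ≠ T → Disjoint S T) : 𝒯.card ≤ 3 * v₂ := by
  have hclass : ∀ c, (𝒯.filter fun T => col T = c).card ≤ 3 := by
    intro c
    have h1 : ((𝒯.filter fun T => col T = c).biUnion id).card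
        = ∑ T ∈ 𝒯.filter (fun T => col T = c), 3 := by
      rw [Finset.card_biUnion]
      · exact Finset.sum_congr rfl fun T hT => h𝒯.card_three T (Finset.mem_filter.1 hT).1
      · intro S hS T hT hne
        rw [Finset.mem_coe, Finset.mem_filter] at hS hT
        exact hdisj S hS.1 T hT.1 (hS.2.trans hT.2.symm) hne
    have h2 := Finset.card_le_univ ((𝒯.filter fun T => col T = c).biUnion id)
    rw [h1, Finset.sum_const, smul_eq_mul, Fintype.card_fin] at h2
    omega
  rw [Finset.card_eq_sum_card_fiberwise (f := col) (t := univ) (by simp)]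
  refine (Finset.sum_le_sum fun c _ => hclass c).trans ?_
  simp [mul_comm]

/-- A packing with 17 triples. The five groups of three consecutive triples in positions `0` to
`14` consist of disjoint triples. -/
def exTri : Fin 17 → Finset (Fin 11) :=
  ![{0, 2, 4}, {1, 7, 10}, {3, 5, 8},
    {1, 3, 4}, {0, 6, 10}, {2, 7, 9},
    {4, 5, 10}, {0, 8, 9}, {3, 6, 7},
    {4, 6, 9}, {0, 5, 7}, {2, 8, 10},
    {4, 7, 8}, {2, 5, 6}, {3, 9, 10},
    {1, 6, 8}, {1, 5, 9}]

/-- A colouring of `exTri` by seven colours, of which the first five are used three times and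
the last two once. -/
def exCol : Fin 17 → ℕ := ![0, 0, 0, 1, 1, 1, 2, 2, 2, 3, 3, 3, 4, 4, 4, 5, 6]

/-- The triples of `exTri` with colour less than `v₂` form a generalized packing. -/
theorem exists_isGenPacking (v₂ : ℕ) :
    ∃ P, IsGenPacking 2 1 ![11, v₂] ![3, 1] P ∧
      Multiset.card P = ((univ : Finset (Fin 17)).filter fun i => exCol i < v₂).card := by
  have h3 : ∀ i, (exTri i).card = 3 := by decide +kernel
  have hpair : ∀ i j, 2 ≤ (exTri i ∩ exTri j).card → i = j := by decide +kernel
  have hdisj : ∀ i j, exCol i = exCol j → 1 ≤ (exTri i ∩ exTri j).card → i = j := by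
    decide +kernel
  refine ⟨_, isGenPacking_of_coloring (κ := {i : Fin 17 // exCol i < v₂})
    (fun i => exTri i.1) (fun i => ⟨exCol i.1, i.2⟩) (fun i => h3 i.1)
    (fun i j h => Subtype.ext (hpair i.1 j.1 h))
    (fun i j hc h => Subtype.ext (hdisj i.1 j.1 (by simpa using hc) h)), ?_⟩
  rw [Multiset.card_map]
  exact Fintype.card_subtype fun i => exCol i < v₂

theorem genPackingNumber_eq {v₂ N : ℕ} (hv : 1 ≤ v₂)
    (hlow : ((univ : Finset (Fin 17)).filter fun i => exCol i < v₂).card = N)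
    (hup : ∀ (𝒯 : Finset (Finset (Fin 11))) (col : Finset (Fin 11) → Fin v₂), TriPack 𝒯 →
      (∀ S ∈ 𝒯, ∀ T ∈ 𝒯, col S = col T → S ≠ T → Disjoint S T) → 𝒯.card ≤ N) :
    genPackingNumber (Fin 2) 2 1 ![11, v₂] ![3, 1] = N := by
  refine IsGreatest.csSup_eq ⟨?_, ?_⟩
  · obtain ⟨P, hP, hc⟩ := exists_isGenPacking v₂
    exact ⟨P, hP, hc.trans hlow⟩
  · rintro n ⟨P, hP, rfl⟩
    obtain ⟨𝒯, col, h𝒯, hc, hdisj⟩ := exists_coloring_of_isGenPacking hv hP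
    rw [← hc]
    exact hup 𝒯 col h𝒯 hdisj

/-- the generalized packing numbers for `𝐯 = (11,v₂)` and `𝐤 = (3,1)`. -/
theorem stmt9 (v₂ : ℕ) (h : 1 ≤ v₂) :
    (v₂ ≤ 5 → genPackingNumber (Fin 2) 2 1 ![11, v₂] ![3, 1] = 3 * v₂) ∧
    (v₂ = 6 → genPackingNumber (Fin 2) 2 1 ![11, v₂] ![3, 1] = 16) ∧
    (7 ≤ v₂ → genPackingNumber (Fin 2) 2 1 ![11, v₂] ![3, 1] = 17) := by
  refine ⟨fun h5 => ?_, fun h6 => ?_, fun h7 => ?_⟩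
  · refine genPackingNumber_eq h ?_ fun 𝒯 col h𝒯 hd => h𝒯.card_le_three_mul col hd
    interval_cases v₂ <;> decide
  · subst h6
    refine genPackingNumber_eq h (by decide) fun 𝒯 col h𝒯 hd => ?_
    have h17 := h𝒯.card_le
    by_contra hlt
    exact h𝒯.not_six_colorable (by omega) col hd
  · refine genPackingNumber_eq h ?_ fun 𝒯 col h𝒯 _ => h𝒯.card_le
    have hlt : ∀ i, exCol i < 7 := by decide
    rw [Finset.filter_true_of_mem fun i _ => (hlt i).trans_le h7]
    simp
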